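/- If k_0 + k_1 < 0 and a(k_0 − k_1) ≥ 0, then f is strictly increasing on (0,∞). (Hence in this case the Stackelberg leader's risk is minimized in the limit d → 0, i.e., d* = 0 and the equilibrium is non-informative.) -/

import Mathlib

/-- The standard Gaussian tail function `Q(x) = ∫_x^∞ (1/√(2π)) e^{-t²/2} dt`. -/
noncomputable def Q (x : ℝ) : ℝ :=
  ∫ t in Set.Ioi x, (1 / Real.sqrt (2 * Real.pi)) * Real.exp (-t ^ 2 / 2)

/-- The transmitter's (normalized) Bayes risk as a function of the normalized signal
separation `d`, when the receiver applies the likelihood-ratio test with threshold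
`τ = eᵃ`: `f(d) = k₀ e^{a/2} Q(a/d + d/2) + k₁ e^{-a/2} Q(d/2 - a/d)`. -/
noncomputable def f (a k0 k1 d : ℝ) : ℝ :=
  k0 * Real.exp (a / 2) * Q (a / d + d / 2) + k1 * Real.exp (-(a / 2)) * Q (d / 2 - a / d)

/-!
Let `φ` be the standard normal density. The weights `e^{±a/2}` are exactly those for which the two
densities in `f'` coincide: since `(a/d) (d/2) = a/2`, completing the square turns both
`e^{a/2} φ(d/2 + a/d)` and `e^{-a/2} φ(d/2 - a/d)` into `e^{-(a/d)²/2} φ(d/2)`. Hence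
`f'(d) = e^{-(a/d)²/2} φ(d/2) (a(k₀ - k₁)/d² - (k₀ + k₁)/2)`,
and the sign of `f'` is that of the last factor.
-/

open MeasureTheory ProbabilityTheory Set

theorem hasDerivAt_integral_Ioi {E : Type*} [NormedAddCommGroup E] [NormedSpace ℝ E]
    [CompleteSpace E] {g : ℝ → E} {a x : ℝ} (hg : IntegrableOn g (Ioi a)) (hax : a < x)
    (hgx : ContinuousAt g x) :
    HasDerivAt (fun y => ∫ t in Ioi y, g t) (-g x) x := by
  have integral_Ioi_eq : ∀ y, a < y → ∫ t in Ioi y, g t = (∫ t in Ioi a, g t) - ∫ t in a..y, g t :=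
    fun y hay => eq_sub_of_add_eq' <|
      intervalIntegral.integral_interval_add_Ioi hg (hg.mono_set (Ioi_subset_Ioi hay.le))
  have hint : IntervalIntegrable g volume a x :=
    (intervalIntegrable_iff_integrableOn_Ioc_of_le hax.le).2 (hg.mono_set Ioc_subset_Ioi_self)
  have hmeas : StronglyMeasurableAtFilter g (nhds x) :=
    ⟨Ioi a, Ioi_mem_nhds hax, hg.aestronglyMeasurable⟩
  refine ((intervalIntegral.integral_hasDerivAt_right hint hmeas hgx).const_sub
    (∫ t in Ioi a, g t)).congr_of_eventuallyEq ?_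
  filter_upwards [Ioi_mem_nhds hax] using integral_Ioi_eq

theorem continuous_gaussianPDFReal (μ : ℝ) (v : NNReal) : Continuous (gaussianPDFReal μ v) := by
  rw [gaussianPDFReal_def]
  fun_prop

theorem exp_mul_gaussianPDFReal_add (μ : ℝ) (v : NNReal) (x y : ℝ) :
    Real.exp ((x - μ) * y / v) * gaussianPDFReal μ v (x + y) =
      Real.exp (-y ^ 2 / (2 * v)) * gaussianPDFReal μ v x := by
  simp only [gaussianPDFReal, mul_left_comm (Real.exp _), ← Real.exp_add]
  ring_nf

theorem Q_eq_integral_gaussianPDFReal (x : ℝ) : Q x = ∫ t in Ioi x, gaussianPDFReal 0 1 t := by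
  simp [Q, gaussianPDFReal]

theorem hasDerivAt_Q (x : ℝ) : HasDerivAt Q (-gaussianPDFReal 0 1 x) x := by
  rw [funext Q_eq_integral_gaussianPDFReal]
  exact hasDerivAt_integral_Ioi (integrable_gaussianPDFReal 0 1).integrableOn (sub_one_lt x)
    (continuous_gaussianPDFReal 0 1).continuousAt

theorem hasDerivAt_f (a k0 k1 : ℝ) {d : ℝ} (hd : d ≠ 0) :
    HasDerivAt (f a k0 k1) (Real.exp (-(a / d) ^ 2 / 2) * gaussianPDFReal 0 1 (d / 2) *
      (a * (k0 - k1) / d ^ 2 - (k0 + k1) / 2)) d := by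
  have hasDerivAt_ratio : HasDerivAt (fun s : ℝ => a / s) (-(a / d ^ 2)) d := by
    simpa [div_eq_mul_inv] using (hasDerivAt_inv hd).const_mul a
  have hasDerivAt_half : HasDerivAt (fun s : ℝ => s / 2) (1 / 2) d := (hasDerivAt_id d).div_const 2
  have hasDerivAt_tail0 := ((hasDerivAt_Q (a / d + d / 2)).comp d
    (hasDerivAt_ratio.add hasDerivAt_half)).const_mul (k0 * Real.exp (a / 2))
  have hasDerivAt_tail1 := ((hasDerivAt_Q (d / 2 - a / d)).comp d
    (hasDerivAt_half.sub hasDerivAt_ratio)).const_mul (k1 * Real.exp (-(a / 2)))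
  have mul_eq : d / 2 * (a / d) = a / 2 := by field_simp
  have exp_mul_density_add : Real.exp (a / 2) * gaussianPDFReal 0 1 (a / d + d / 2) =
      Real.exp (-(a / d) ^ 2 / 2) * gaussianPDFReal 0 1 (d / 2) := by
    simpa [mul_eq, add_comm] using exp_mul_gaussianPDFReal_add 0 1 (d / 2) (a / d)
  have exp_neg_mul_density_sub : Real.exp (-(a / 2)) * gaussianPDFReal 0 1 (d / 2 - a / d) =
      Real.exp (-(a / d) ^ 2 / 2) * gaussianPDFReal 0 1 (d / 2) := by
    simpa [mul_eq, ← sub_eq_add_neg] using exp_mul_gaussianPDFReal_add 0 1 (d / 2) (-(a / d))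
  refine (hasDerivAt_tail0.add hasDerivAt_tail1).congr_deriv ?_
  linear_combination k0 * (a / d ^ 2 - 1 / 2) * exp_mul_density_add -
    k1 * (a / d ^ 2 + 1 / 2) * exp_neg_mul_density_sub

/-- If `k₀ + k₁ < 0` and `a(k₀ - k₁) ≥ 0`, then `f` is strictly increasing on `(0, ∞)`. -/
theorem stmt_9 (a k0 k1 : ℝ) (hsum : k0 + k1 < 0) (hdiff : 0 ≤ a * (k0 - k1)) :
    StrictMonoOn (f a k0 k1) (Set.Ioi 0) := by
  refine strictMonoOn_of_hasDerivWithinAt_pos (convex_Ioi 0)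
    (fun d hd => (hasDerivAt_f a k0 k1 (ne_of_gt hd)).continuousAt.continuousWithinAt)
    (fun d hd => (hasDerivAt_f a k0 k1 (interior_subset hd).ne').hasDerivWithinAt) fun d _ => ?_
  have hfactor : 0 < a * (k0 - k1) / d ^ 2 - (k0 + k1) / 2 := by
    have : 0 ≤ a * (k0 - k1) / d ^ 2 := div_nonneg hdiff (sq_nonneg d)
    linarith
  exact mul_pos (mul_pos (Real.exp_pos _) (gaussianPDFReal_pos 0 1 _ one_ne_zero)) hfactor
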